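/- Let B = 𝔽₂[[y₁,…,y₆]]/(y₁²y₃²y₆ + y₁y₂y₃y₄y₅ + y₂²y₄²y₆). Then the local cohomology module H²_{(y₁,y₂)}(B) has infinitely many associated primes over B. -/

import Mathlib

/-!
The associated primes exhibited are the kernels `𝔭_p` of the maps `B → (𝔽₂[u]/(p))[[s]]` sending
`y₁, …, y₄` to `0`, `y₅` to `u s` and `y₆` to `s`, one for each monic irreducible `p ∈ 𝔽₂[u]`
(`primeOf`). There are infinitely many such `p`, and `p` can be recovered from `𝔭_p`.

Put `A = y₁y₃`, `C = y₂y₄`, so that `f = y₆A² + y₅AC + y₆C²`. Repeated use of this relation produces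
the Fibonacci polynomials `τ₀ = 0`, `τ₁ = 1`, `τ_(k+2) = u τ_(k+1) + τ_k`, with `u = y₅/y₆`: in `B`,
`y₆^m A^(m+1)` is the homogenised `τ_(m+1)` times `A C^m`, up to a multiple of `C^(m+1)`
(`tauH_mem`). Every irreducible `p` divides some `τ_(m+1)`, because the companion matrix of the
recursion has finite order over the finite field `𝔽₂[u]/(p)` (`exists_dvd_tau`).

Write `τ_(m+1) = p g` and `b = y₁ y₂ y₆^m g A C^m`. The Čech class of `b/(y₁y₂)^(m+2)` has annihilator
exactly `𝔭_p`. The relation above and similar reductions show that `𝔭_p` kills it (`kill_P`). For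
the converse, comparing coefficients along a line of monomials in an equation
`r b (y₁y₂)^k ∈ (y₁^(m+2+k), y₂^(m+2+k), f)` gives a three-term recursion, which telescopes against the
Fibonacci polynomials to `g · Ψ r ∈ (τ_(m+1))` (`detect_P`).

Local cohomology being defined as the colimit of `Ext²(B/J^t, B)`, the Čech class has to be realised
as a 2-cocycle on a projective resolution. This is possible because `y₂` is a nonzerodivisor on `B`
and the saturation of `(y₂ⁿ)` with respect to `y₁` is reached at the exponent `2n`
(`weak_proregular`); Koszul relations inside a resolution decide when its multiples vanish in the
colimit. The result is the criterion `exists_annihilator_eq`.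
-/

/-!
STATEMENT 11: Let `B = 𝔽₂[[y₁,…,y₆]]/(y₁²y₃²y₆ + y₁y₂y₃y₄y₅ + y₂²y₄²y₆)` (the Singh–Swanson
hypersurface).  Then `H²_{(y₁,y₂)}(B)` has infinitely many associated primes over `B`.
Variables are 0-indexed: `yⱼ₊₁ = X j`.
-/

noncomputable section

/-- The power series ring `𝔽₂[[y₁,…,y₆]]`. -/
abbrev P : Type := MvPowerSeries (Fin 6) (ZMod 2)

/-- `y j` is the variable `yⱼ₊₁`. -/
def y (j : Fin 6) : P := MvPowerSeries.X j

/-- `f = y₁²y₃²y₆ + y₁y₂y₃y₄y₅ + y₂²y₄²y₆`. -/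
def f : P := y 0 ^ 2 * y 2 ^ 2 * y 5 + y 0 * y 1 * y 2 * y 3 * y 4 + y 1 ^ 2 * y 3 ^ 2 * y 5

/-- `B = 𝔽₂[[y₁,…,y₆]]/(f)`. -/
abbrev B : Type := P ⧸ Ideal.span {f}

/-- The ideal `(y₁, y₂)` of `B`. -/
def J : Ideal B :=
  Ideal.span {Ideal.Quotient.mk (Ideal.span {f}) (y 0), Ideal.Quotient.mk (Ideal.span {f}) (y 1)}

/-! ### Classes in `Ext²` and cocycles -/

section
open CategoryTheory Limits Opposite

variable {R : Type} [CommRing R]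

/-- The chain map `Hom(P, M) ⟶ Hom(P′, M)` induced by a chain map `γ : P′ ⟶ P` between projective
resolutions. -/
def yonMap {N' N : ModuleCat.{0} R} (P' : ProjectiveResolution N')
    (P : ProjectiveResolution N) (γ : P'.complex ⟶ P.complex) (M : ModuleCat.{0} R) :
    P.complex.linearYonedaObj R M ⟶ P'.complex.linearYonedaObj R M :=
  (HomologicalComplex.unopFunctor _ _).map
    (((((linearYoneda R (ModuleCat.{0} R)).obj M).rightOp.mapHomologicalComplex _).map γ).op)

/-- Naturality of the isomorphism between the homology of a complex and of its opposite. -/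
lemma homologyUnop_nat {V : Type*} [Category V] [Abelian V] {K L : HomologicalComplex Vᵒᵖ (ComplexShape.down ℕ)}
   (φ : K ⟶ L) (i : ℕ) :
   HomologicalComplex.homologyMap ((HomologicalComplex.unopFunctor _ _).map φ.op) i ≫
     (K.homologyUnop i).hom = (L.homologyUnop i).hom ≫ (HomologicalComplex.homologyMap φ i).unop := by
  have := HomologicalComplex.homologyOp_hom_naturality ((HomologicalComplex.unopFunctor _ _).map φ.op) i
  exact (congrArg Quiver.Hom.unop this).symm

/-- The isomorphism `P.isoExt`, computing `Ext` from a projective resolution, is natural in the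
first variable: `Ext` of `g` is computed by any chain map lifting `g`. -/
lemma extNat {N' N : ModuleCat.{0} R} (g : N' ⟶ N) (P' : ProjectiveResolution N')
    (P : ProjectiveResolution N) (γ : P'.complex ⟶ P.complex)
    (comm : γ.f 0 ≫ P.π.f 0 = P'.π.f 0 ≫ g) (M : ModuleCat.{0} R) (n : ℕ) :
    ((Ext R (ModuleCat.{0} R) n).map g.op).app M ≫ (P'.isoExt n M).hom =
      (P.isoExt n M).hom ≫ HomologicalComplex.homologyMap (yonMap P' P γ M) n := by
  have h1 := ProjectiveResolution.isoLeftDerivedObj_inv_naturality g P' P γ comm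
    ((linearYoneda R (ModuleCat.{0} R)).obj M).rightOp n
  have h2 := congrArg Quiver.Hom.unop h1
  have h3 := homologyUnop_nat ((((linearYoneda R (ModuleCat.{0} R)).obj M).rightOp.mapHomologicalComplex (ComplexShape.down ℕ)).map γ) n
  have h4 : ∀ {A B C D A' B' : ModuleCat.{0} R} (a : A ⟶ B) (b : B ≅ C) (d : A ≅ D) (e : D ⟶ C) (b' : C ≅ A') (d' : D ≅ B') (e' : B' ⟶ A'),
    a ≫ b.hom = d.hom ≫ e → e ≫ b'.hom = d'.hom ≫ e' → a ≫ (b ≪≫ b').hom = (d ≪≫ d').hom ≫ e' := by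
    intro A B C D A' B' a b d e b' d' e' h1 h2
    simp [reassoc_of% h1, h2]
  refine h4 _ _ _ _ _ _ _ h2 ?_
  have h5 : ∀ {A B C D : ModuleCat.{0} R} (a : A ⟶ B) (b : B ≅ C) (d : A ≅ D) (e : D ⟶ C),
    a ≫ b.hom = d.hom ≫ e → e ≫ b.inv = d.inv ≫ a := by
    intro A B C D a b d e h
    rw [Iso.comp_inv_eq, Category.assoc, h, Iso.inv_hom_id_assoc]
  exact h5 _ _ _ _ h3

/-- The module `Ext²(N, M)`. -/
abbrev E2 (N M : ModuleCat.{0} R) : ModuleCat.{0} R :=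
  ((Ext R (ModuleCat.{0} R) 2).obj (op N)).obj M

/-- The class `z ∈ Ext²(N, M)` is represented by the cocycle `φ : P₂ ⟶ M`, for a projective
resolution `P` of `N`. -/
def ExtRep {N M : ModuleCat.{0} R} (P : ProjectiveResolution N) (φ : P.complex.X 2 ⟶ M)
    (z : E2 N M) : Prop :=
  ∃ c : ((P.complex.linearYonedaObj R M).cycles 2 : ModuleCat.{0} R),
    (P.complex.linearYonedaObj R M).iCycles 2 c = φ ∧
    (P.complex.linearYonedaObj R M).homologyπ 2 c = (P.isoExt 2 M).hom z

variable {N M : ModuleCat.{0} R} (P : ProjectiveResolution N)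

/-- Every cocycle represents a class. -/
lemma exists_rep (φ : P.complex.X 2 ⟶ M) (h : P.complex.d 3 2 ≫ φ = 0) : ∃ z, ExtRep P φ z := by
  set L := P.complex.linearYonedaObj R M with hL
  have h1 := (ShortComplex.exact_of_f_is_kernel (.mk (L.iCycles 2) (L.d 2 3) (by simp))
    (L.cyclesIsKernel 2 3 (by simp)))
  rw [ShortComplex.moduleCat_exact_iff] at h1
  obtain ⟨c, hc⟩ := h1 φ h
  exact ⟨(P.isoExt 2 M).inv (L.homologyπ 2 c), c, hc, by rw [Iso.inv_hom_id_apply]⟩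

lemma ExtRep.smul {φ : P.complex.X 2 ⟶ M} {z : E2 N M} (h : ExtRep P φ z) (r : R) :
    ExtRep P (r • φ) (r • z) := by
  obtain ⟨c, h1, h2⟩ := h
  refine ⟨r • c, ?_, ?_⟩
  · rw [map_smul, h1]; rfl
  · rw [map_smul, map_smul, h2]

/-- A class vanishes exactly when a representing cocycle is a coboundary. -/
lemma ExtRep.eq_zero_iff {φ : P.complex.X 2 ⟶ M} {z : E2 N M} (h : ExtRep P φ z) :
    z = 0 ↔ ∃ ψ : P.complex.X 1 ⟶ M, φ = P.complex.d 2 1 ≫ ψ := by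
  obtain ⟨c, h1, h2⟩ := h
  set L := P.complex.linearYonedaObj R M with hL
  have hex := (ShortComplex.exact_of_g_is_cokernel (.mk (L.toCycles 1 2) (L.homologyπ 2) (by simp))
    (L.homologyIsCokernel 1 2 (by simp)))
  rw [ShortComplex.moduleCat_exact_iff] at hex
  have hd : ∀ ψ : P.complex.X 1 ⟶ M, L.iCycles 2 (L.toCycles 1 2 ψ) = P.complex.d 2 1 ≫ ψ := by
    intro ψ
    have := L.toCycles_i 1 2
    exact ConcreteCategory.congr_hom this ψ
  have hinj : Function.Injective (L.iCycles 2) := (ModuleCat.mono_iff_injective _).1 inferInstance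
  constructor
  · rintro rfl
    rw [map_zero] at h2
    obtain ⟨ψ, hψ⟩ := hex c h2
    exact ⟨ψ, h1.symm.trans ((congrArg (L.iCycles 2) hψ.symm).trans (hd ψ))⟩
  · rintro ⟨ψ, rfl⟩
    rw [← hd] at h1
    have h3 := hinj h1
    have h4 : L.homologyπ 2 c = 0 := by
      rw [h3]
      exact ConcreteCategory.congr_hom (L.toCycles_comp_homologyπ 1 2) ψ
    rw [h4] at h2
    have : Function.Injective (P.isoExt (R := R) 2 M).hom :=
      (ModuleCat.mono_iff_injective _).1 inferInstance
    exact this (by rw [← h2, map_zero])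

/-- The map `Ext²(N, M) → Ext²(N′, M)` induced by `g` is precomposition of cocycles with a lift of
`g` to the resolutions. -/
lemma ExtRep.map {N' : ModuleCat.{0} R} (g : N' ⟶ N) (P' : ProjectiveResolution N')
    (γ : P'.complex ⟶ P.complex)
    (comm : γ.f 0 ≫ P.π.f 0 = P'.π.f 0 ≫ g) {φ : P.complex.X 2 ⟶ M} {z : E2 N M} (h : ExtRep P φ z) :
    ExtRep P' (γ.f 2 ≫ φ) (((Ext R (ModuleCat.{0} R) 2).map g.op).app M z) := by
  obtain ⟨c, h1, h2⟩ := h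
  refine ⟨HomologicalComplex.cyclesMap (yonMap P' P γ M) 2 c, ?_, ?_⟩
  · have := ConcreteCategory.congr_hom (HomologicalComplex.cyclesMap_i (yonMap P' P γ M) 2) c
    refine Eq.trans this ?_
    rw [ConcreteCategory.comp_apply, h1]
    rfl
  · have := ConcreteCategory.congr_hom (HomologicalComplex.homologyπ_naturality (yonMap P' P γ M) 2) c
    refine Eq.trans this.symm ?_
    rw [ConcreteCategory.comp_apply, h2]
    exact (ConcreteCategory.congr_hom (extNat g P' P γ comm M 2) z).symm

/-- An element of a stage of the colimit defining local cohomology dies in the colimit exactly when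
it dies at some later stage. -/
lemma colimit_app_eq_zero {D : ℕᵒᵖᵒᵖ ⥤ ModuleCat.{0} R ⥤ ModuleCat.{0} R} {M : ModuleCat.{0} R}
    (t : ℕᵒᵖᵒᵖ) (z : (D.obj t).obj M) :
    (colimit.ι D t).app M z = 0 ↔ ∃ (t' : ℕᵒᵖᵒᵖ) (g : t ⟶ t'), (D.map g).app M z = 0 := by
  constructor
  · intro h
    have hc : IsColimit (((evaluation _ _).obj M).mapCocone (colimit.cocone D)) :=
      isColimitOfPreserves ((evaluation (ModuleCat.{0} R) (ModuleCat.{0} R)).obj M) (colimit.isColimit D)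
    obtain ⟨k, f, g, hk⟩ := Concrete.isColimit_exists_of_rep_eq (D ⋙ (evaluation _ _).obj M) hc z 0
      (by rw [map_zero]; exact h)
    refine ⟨k, f, ?_⟩
    rw [map_zero] at hk
    exact hk
  · rintro ⟨t', g, h⟩
    have h1 := congrArg (fun α => α.app M) (colimit.w D g)
    have h2 := ConcreteCategory.congr_hom h1 z
    refine h2.symm.trans ?_
    refine (congrArg ((colimit.ι D t').app M) h).trans ?_
    simp

end

/-! ### The cocycle of a Čech class -/

section
variable {R : Type} [CommRing R]

/-- Given a complex `P2 → P1 → P0` with `P0`, `P1` projective and an augmentation `π` to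
`R/(x^(n+s), y^(n+s))`, lift `π` to `u : P0 → R` and write `u ∘ d1 = v x^(n+s) + w y^(n+s)`. On boundaries the two terms
cancel, so the hypothesis `hwp` makes `b v x^s` divisible by `y^n` there. The quotient `φ` is the
2-cocycle which stands for the Čech class of `b/(xy)^n`. -/
lemma exists_cocycle (x y b : R) (n s : ℕ)
    (hy : ∀ k c, y ^ k * c = 0 → c = 0)
    (hwp : ∀ α β, α * x ^ (n + s) + β * y ^ (n + s) = 0 → ∃ c, α * x ^ s = c * y ^ n)
    {P0 P1 P2 : Type} [AddCommGroup P0] [Module R P0] [AddCommGroup P1] [Module R P1]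
    [AddCommGroup P2] [Module R P2] [Module.Projective R P0] [Module.Projective R P1]
    (d1 : P1 →ₗ[R] P0) (d2 : P2 →ₗ[R] P1) (h12 : d1 ∘ₗ d2 = 0)
    (π : P0 →ₗ[R] R ⧸ Ideal.span {x ^ (n + s), y ^ (n + s)}) (h01 : π ∘ₗ d1 = 0) :
    ∃ (u : P0 →ₗ[R] R) (v w : P1 →ₗ[R] R) (φ : P2 →ₗ[R] R),
      (∀ p, Ideal.Quotient.mk _ (u p) = π p) ∧
      (∀ q, u (d1 q) = v q * x ^ (n + s) + w q * y ^ (n + s)) ∧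
      (∀ q, φ q * y ^ n = b * (v (d2 q) * x ^ s)) ∧
      (∀ q, φ q * x ^ n = - (b * (w (d2 q) * y ^ s))) := by
  obtain ⟨u, hu⟩ := Module.projective_lifting_property
    (Submodule.mkQ (Ideal.span {x ^ (n + s), y ^ (n + s)})) π (Submodule.mkQ_surjective _)
  have hu' : ∀ p, Ideal.Quotient.mk _ (u p) = π p := fun p => LinearMap.congr_fun hu p
  let I := Ideal.span {x ^ (n + s), y ^ (n + s)}
  let k0 : R × R →ₗ[R] R :=
    (LinearMap.toSpanSingleton R R (x ^ (n+s))).coprod (LinearMap.toSpanSingleton R R (y ^ (n+s)))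
  have hk0 : ∀ a, k0 a = a.1 * x ^ (n + s) + a.2 * y ^ (n + s) := fun a => by
    simp [k0, LinearMap.toSpanSingleton]
  have hk0I : ∀ a, k0 a ∈ I := fun a => by
    rw [hk0]
    exact Ideal.mem_span_pair.2 ⟨_, _, rfl⟩
  let k : R × R →ₗ[R] I := k0.codRestrict I hk0I
  have hks : Function.Surjective k := by
    rintro ⟨z, hz⟩
    obtain ⟨a, c, h⟩ := Ideal.mem_span_pair.1 hz
    exact ⟨(a, c), Subtype.ext ((hk0 _).trans h)⟩
  have hI : ∀ q, (u ∘ₗ d1) q ∈ I := fun q => by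
    rw [← Ideal.Quotient.eq_zero_iff_mem]
    exact (hu' _).trans (LinearMap.congr_fun h01 q)
  obtain ⟨vw, hvw⟩ := Module.projective_lifting_property k ((u ∘ₗ d1).codRestrict I hI) hks
  have hvw' : ∀ q, u (d1 q) = (vw q).1 * x ^ (n + s) + (vw q).2 * y ^ (n + s) := fun q => by
    rw [← hk0]
    exact (congrArg Subtype.val (LinearMap.congr_fun hvw q)).symm
  have hex : ∀ q : P2, ∃ c, (vw (d2 q)).1 * x ^ s = c * y ^ n := fun q => by
    apply hwp _ (vw (d2 q)).2
    rw [← hvw', show d1 (d2 q) = 0 from LinearMap.congr_fun h12 q, map_zero]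
  choose c hc using hex
  have hcan : ∀ a a' : R, a * y ^ n = a' * y ^ n → a = a' := fun a a' h => by
    refine sub_eq_zero.1 (hy n _ ?_)
    linear_combination h
  let cl : P2 →ₗ[R] R :=
    { toFun := c
      map_add' := fun p q => hcan _ _ (by rw [← hc, add_mul, ← hc, ← hc]; simp [add_mul])
      map_smul' := fun r q => hcan _ _ (by
        rw [← hc, RingHom.id_apply, smul_eq_mul, mul_assoc, ← hc]; simp [mul_assoc]) }
  refine ⟨u, LinearMap.fst R R R ∘ₗ vw, LinearMap.snd R R R ∘ₗ vw, b • cl, hu', hvw', ?_, ?_⟩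
  · intro q
    change b * c q * y ^ n = b * ((vw (d2 q)).1 * x ^ s)
    rw [hc]; ring
  · intro q
    change b * c q * x ^ n = -(b * ((vw (d2 q)).2 * y ^ s))
    have h := hvw' (d2 q)
    rw [show d1 (d2 q) = 0 from LinearMap.congr_fun h12 q, map_zero] at h
    apply hcan
    refine sub_eq_zero.1 (sub_eq_zero.2 ?_)
    have := hc q
    rw [pow_add, pow_add] at h
    linear_combination (-b * x ^ n) * this - b * h

/-- If `r b ∈ (x^n, y^n)`, then `r φ` is a coboundary. -/
lemma cocycle_kill (x y b : R) (n s : ℕ)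
    (hy : ∀ k c, y ^ k * c = 0 → c = 0)
    {P0 P1 P2 : Type} [AddCommGroup P0] [Module R P0] [AddCommGroup P1] [Module R P1]
    [AddCommGroup P2] [Module R P2]
    (d1 : P1 →ₗ[R] P0) (d2 : P2 →ₗ[R] P1) (h12 : d1 ∘ₗ d2 = 0)
    (u : P0 →ₗ[R] R) (v w : P1 →ₗ[R] R) (φ : P2 →ₗ[R] R)
    (huv : ∀ q, u (d1 q) = v q * x ^ (n + s) + w q * y ^ (n + s))
    (hφ : ∀ q, φ q * y ^ n = b * (v (d2 q) * x ^ s))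
    (r α β : R) (hr : r * b = x ^ n * α + y ^ n * β) :
    r • φ = ((β * x ^ s) • v - (α * y ^ s) • w) ∘ₗ d2 := by
  ext q
  have h := huv (d2 q)
  rw [show d1 (d2 q) = 0 from LinearMap.congr_fun h12 q, map_zero, pow_add, pow_add] at h
  simp only [LinearMap.smul_apply, LinearMap.comp_apply, LinearMap.sub_apply, smul_eq_mul]
  refine sub_eq_zero.1 (hy n _ ?_)
  linear_combination r * hφ q + hr * v (d2 q) * x ^ s - α * h

/-- Evaluating the cocycle `φ` on the image of a Koszul complex on `x^(n+s+k), y^(n+s+k)`, with basis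
`e`, `ex`, `ey`, `exy`: if `r φ` becomes a coboundary there, then
`r b (xy)^(s+k) ∈ (x^(n+s+k), y^(n+s+k))`. -/
lemma cocycle_detect (x y b : R) (n s k : ℕ)
    (hy : ∀ k c, y ^ k * c = 0 → c = 0)
    (hwp : ∀ α β, α * x ^ (n + s) + β * y ^ (n + s) = 0 → ∃ c, α * x ^ s = c * y ^ n)
    {P0 P1 P2 : Type} [AddCommGroup P0] [Module R P0] [AddCommGroup P1] [Module R P1]
    [AddCommGroup P2] [Module R P2]
    (d1 : P1 →ₗ[R] P0) (d2 : P2 →ₗ[R] P1)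
    (u : P0 →ₗ[R] R) (v w : P1 →ₗ[R] R) (φ : P2 →ₗ[R] R)
    (huv : ∀ q, u (d1 q) = v q * x ^ (n + s) + w q * y ^ (n + s))
    (hφ : ∀ q, φ q * y ^ n = b * (v (d2 q) * x ^ s))
    (e : P0) (ex ey : P1) (exy : P2) (he : ∃ α β, u e = 1 + (α * x ^ (n + s) + β * y ^ (n + s)))
    (hex : d1 ex = x ^ (n + s + k) • e) (hey : d1 ey = y ^ (n + s + k) • e)
    (hexy : d2 exy = y ^ (n + s + k) • ex - x ^ (n + s + k) • ey)
    (r p q : R) (hr : r * φ exy = y ^ (n + s + k) * p - x ^ (n + s + k) * q) :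
    ∃ α β, r * b * (x * y) ^ (s + k) = x ^ (n + (s + k)) * α + y ^ (n + (s + k)) * β := by
  obtain ⟨α, β, he⟩ := he
  have h1 := huv ex
  rw [hex, map_smul, smul_eq_mul] at h1
  have h2 := huv ey
  rw [hey, map_smul, smul_eq_mul] at h2
  obtain ⟨cx, hcx⟩ := hwp (v ex - x ^ k * u e) (w ex) (by
    rw [pow_add _ (n + s) k] at h1
    linear_combination -h1)
  obtain ⟨cy, hcy⟩ := hwp (v ey) (w ey - y ^ k * u e) (by
    rw [pow_add _ (n + s) k] at h2
    linear_combination -h2)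
  have h3 : φ exy = b * (y ^ (s + k) * x ^ (s + k) * u e + cx * y ^ (n + s + k)
      - x ^ (n + s + k) * cy) := by
    refine sub_eq_zero.1 (hy n _ ?_)
    have h4 := hφ exy
    rw [hexy, map_sub, map_smul, map_smul, smul_eq_mul, smul_eq_mul] at h4
    simp only [pow_add] at h4 ⊢
    linear_combination h4 + b * y ^ n * y ^ s * y ^ k * hcx - b * x ^ n * x ^ s * x ^ k * hcy
  rw [h3, he] at hr
  refine ⟨- q + r * b * cy - r * b * α * x ^ s * y ^ (s + k),
    p - r * b * cx - r * b * β * y ^ s * x ^ (s + k), ?_⟩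
  simp only [pow_add, mul_pow] at hr ⊢
  linear_combination hr

end

/-! ### Annihilators in the second local cohomology -/

section
open CategoryTheory Limits Opposite

variable {R : Type} [CommRing R]

/-- The augmentation `P₀ ⟶ N` of a projective resolution. -/
def aug {N : ModuleCat.{0} R} (P : ProjectiveResolution N) : P.complex.X 0 ⟶ N := P.π.f 0

lemma aug_surjective {N : ModuleCat.{0} R} (P : ProjectiveResolution N) :
    Function.Surjective (aug P) := by
  have : Epi (P.π.f 0) := inferInstance
  exact (ModuleCat.epi_iff_surjective _).1 this

lemma aug_d {N : ModuleCat.{0} R} (P : ProjectiveResolution N) (q : P.complex.X 1) :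
    aug P (P.complex.d 1 0 q) = 0 :=
  ConcreteCategory.congr_hom P.complex_d_comp_π_f_zero q

lemma exact_aug {N : ModuleCat.{0} R} (P : ProjectiveResolution N) (p : P.complex.X 0)
    (h : aug P p = 0) : ∃ q, P.complex.d 1 0 q = p :=
  (ShortComplex.moduleCat_exact_iff _).1 P.exact₀ p h

lemma exact_one {N : ModuleCat.{0} R} (P : ProjectiveResolution N) (p : P.complex.X 1)
    (h : P.complex.d 1 0 p = 0) : ∃ q, P.complex.d 2 1 q = p :=
  (ShortComplex.moduleCat_exact_iff _).1 (P.exact_succ 0) p h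

/-- The Koszul relations on `a, b ∈ I` can be lifted to any projective resolution of `R/I`. -/
lemma exists_koszul {I : Ideal R} (P : ProjectiveResolution (ModuleCat.of R (R ⧸ I))) (a b : R)
    (ha : a ∈ I) (hb : b ∈ I) :
    ∃ (e : P.complex.X 0) (ex ey : P.complex.X 1) (exy : P.complex.X 2),
      aug P e = Ideal.Quotient.mk I 1 ∧ P.complex.d 1 0 ex = a • e ∧
      P.complex.d 1 0 ey = b • e ∧ P.complex.d 2 1 exy = b • ex - a • ey := by
  obtain ⟨e, he⟩ := aug_surjective P (Ideal.Quotient.mk I 1)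
  have key : ∀ c ∈ I, ∃ q, P.complex.d 1 0 q = c • e := fun c hc => by
    apply exact_aug
    rw [map_smul, he]
    exact Ideal.Quotient.eq_zero_iff_mem.2 (by simpa using hc)
  obtain ⟨ex, hex⟩ := key a ha
  obtain ⟨ey, hey⟩ := key b hb
  obtain ⟨exy, hexy⟩ := exact_one P (b • ex - a • ey) (by
    rw [map_sub, map_smul, map_smul, hex, hey, smul_smul, smul_smul, mul_comm, sub_self])
  exact ⟨e, ex, ey, exy, he, hex, hey, hexy⟩

/-- A criterion for a prescribed ideal `𝔭` to be the annihilator of an element of `H²_(x,y)(R)`, namely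
of the class of `b/(xy)^n`. The hypotheses `hy` and `hwp` replace the comparison of the colimit of
`Ext²(R/(x,y)^t, R)` with Čech cohomology. The conditions `hkill` and `hdet` say that `𝔭` kills the
Čech class and that nothing outside `𝔭` does. -/
theorem exists_annihilator_eq (x y b : R) (𝔭 : Ideal R) (n s : ℕ)
    (hy : ∀ k c, y ^ k * c = 0 → c = 0)
    (hwp : ∀ α β, α * x ^ (n + s) + β * y ^ (n + s) = 0 → ∃ c, α * x ^ s = c * y ^ n)
    (hkill : ∀ r ∈ 𝔭, ∃ α β, r * b = x ^ n * α + y ^ n * β)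
    (hdet : ∀ r k, (∃ α β, r * b * (x * y) ^ k = x ^ (n + k) * α + y ^ (n + k) * β) → r ∈ 𝔭) :
    ∃ z : (localCohomology (Ideal.span {x, y}) 2).obj (ModuleCat.of R R),
      ∀ r : R, r • z = 0 ↔ r ∈ 𝔭 := by
  set 𝔞 := Ideal.span {x ^ (n + s), y ^ (n + s)} with h𝔞
  set K := Ideal.span {x, y} with hK
  obtain ⟨t, ht⟩ : ∃ t, K ^ t ≤ 𝔞 := by
    refine ⟨n + s + (n + s), ?_⟩
    rw [hK, h𝔞, Ideal.span_insert x, Ideal.span_insert (x ^ (n+s)), ← Ideal.span_singleton_pow,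
      ← Ideal.span_singleton_pow]
    exact Ideal.sup_pow_add_le_pow_sup_pow
  obtain ⟨P⟩ : Nonempty (ProjectiveResolution (ModuleCat.of R (R ⧸ K ^ t))) :=
    HasProjectiveResolution.out
  have hP0 : Module.Projective R (P.complex.X 0) :=
    (IsProjective.iff_projective _).2 (P.projective 0)
  have hP1 : Module.Projective R (P.complex.X 1) :=
    (IsProjective.iff_projective _).2 (P.projective 1)
  let π : P.complex.X 0 →ₗ[R] R ⧸ 𝔞 :=
    (Submodule.mapQ (K ^ t) 𝔞 LinearMap.id ht) ∘ₗ (aug P).hom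
  have h12 : (P.complex.d 1 0).hom ∘ₗ (P.complex.d 2 1).hom = 0 :=
    congrArg ModuleCat.Hom.hom (P.complex.d_comp_d 2 1 0)
  have h23 : ∀ q, P.complex.d 2 1 (P.complex.d 3 2 q) = 0 := fun q =>
    ConcreteCategory.congr_hom (P.complex.d_comp_d 3 2 1) q
  obtain ⟨u, v, w, φ, hu, huv, hφ, -⟩ := exists_cocycle x y b n s hy hwp (P.complex.d 1 0).hom
    (P.complex.d 2 1).hom h12 π (by
      ext q
      change Submodule.mapQ (K ^ t) 𝔞 LinearMap.id ht (aug P (P.complex.d 1 0 q)) = 0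
      rw [aug_d, map_zero])
  obtain ⟨z, hz⟩ := exists_rep P (M := ModuleCat.of R R) (ModuleCat.ofHom φ) (by
    ext q
    refine hy n _ ?_
    change y ^ n * φ (P.complex.d 3 2 q) = 0
    rw [mul_comm, hφ]
    change b * (v (P.complex.d 2 1 (P.complex.d 3 2 q)) * x ^ s) = 0
    rw [h23, map_zero, zero_mul, mul_zero])
  let D := localCohomology.diagram (localCohomology.idealPowersDiagram K) 2
  let t0 : ℕᵒᵖᵒᵖ := op (op t)
  refine ⟨(colimit.ι D t0).app (ModuleCat.of R R) z, fun r => ?_⟩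
  have hmap : r • (colimit.ι D t0).app (ModuleCat.of R R) z =
      (colimit.ι D t0).app (ModuleCat.of R R) (r • z) := (map_smul _ r z).symm
  suffices H : (colimit.ι D t0).app (ModuleCat.of R R) (r • z) = 0 ↔ r ∈ 𝔭 from
    ⟨fun h => H.1 (hmap.symm.trans h), fun h => hmap.trans (H.2 h)⟩
  constructor
  -- If `r z` dies at a later stage, compare with a Koszul complex inside a resolution there.
  · intro h
    obtain ⟨t', g, hg⟩ := (colimit_app_eq_zero (D := D) t0 (r • z)).1 h
    let I' : Ideal R := K ^ t'.unop.unop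
    let N' : ModuleCat.{0} R := ModuleCat.of R (R ⧸ I')
    let gN : N' ⟶ ModuleCat.of R (R ⧸ K ^ t) :=
      (localCohomology.ringModIdeals (localCohomology.idealPowersDiagram K)).map g.unop
    obtain ⟨P'⟩ : Nonempty (ProjectiveResolution N') := HasProjectiveResolution.out
    let γ := ProjectiveResolution.lift gN P' P
    have hr := ExtRep.map P gN P' γ (ProjectiveResolution.lift_commutes_zero gN P' P) (hz.smul P r)
    obtain ⟨ψ, hψ⟩ := (hr.eq_zero_iff P').1 hg
    set k := t'.unop.unop with hkk
    have hxK : x ^ (n + s + k) ∈ I' :=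
      Ideal.pow_le_pow_right (Nat.le_add_left _ _)
        (Ideal.pow_mem_pow (Ideal.subset_span (by simp)) _)
    have hyK : y ^ (n + s + k) ∈ I' :=
      Ideal.pow_le_pow_right (Nat.le_add_left _ _)
        (Ideal.pow_mem_pow (Ideal.subset_span (by simp)) _)
    obtain ⟨e, ex, ey, exy, he, hex, hey, hexy⟩ := exists_koszul P' _ _ hxK hyK
    have hγ0 : ∀ p, aug P (γ.f 0 p) = gN (aug P' p) := fun p =>
      ConcreteCategory.congr_hom (ProjectiveResolution.lift_commutes_zero gN P' P) p
    have hγ1 : ∀ p, P.complex.d 1 0 (γ.f 1 p) = γ.f 0 (P'.complex.d 1 0 p) := fun p =>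
      ConcreteCategory.congr_hom (γ.comm 1 0) p
    have hγ2 : ∀ p, P.complex.d 2 1 (γ.f 2 p) = γ.f 1 (P'.complex.d 2 1 p) := fun p =>
      ConcreteCategory.congr_hom (γ.comm 2 1) p
    refine hdet r (s + k) (cocycle_detect x y b n s k hy hwp (P.complex.d 1 0).hom
      (P.complex.d 2 1).hom u v w φ huv hφ (γ.f 0 e) (γ.f 1 ex) (γ.f 1 ey) (γ.f 2 exy)
      ?_ ?_ ?_ ?_ r (ψ ex) (ψ ey) ?_)
    · have h1 : Ideal.Quotient.mk 𝔞 (u (γ.f 0 e)) = Ideal.Quotient.mk 𝔞 1 := by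
        rw [hu]
        change Submodule.mapQ (K ^ t) 𝔞 LinearMap.id ht (aug P (γ.f 0 e)) = _
        rw [hγ0, he]
        rfl
      rw [Ideal.Quotient.eq, h𝔞, Ideal.mem_span_pair] at h1
      obtain ⟨α, β, h⟩ := h1
      exact ⟨α, β, by rw [h]; ring⟩
    · refine (hγ1 ex).trans ?_
      rw [hex, map_smul]
    · refine (hγ1 ey).trans ?_
      rw [hey, map_smul]
    · refine (hγ2 exy).trans ?_
      rw [hexy, map_sub, map_smul, map_smul]
    · have h2 := ConcreteCategory.congr_hom hψ exy
      change r * φ (γ.f 2 exy) = ψ (P'.complex.d 2 1 exy) at h2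
      rw [h2, hexy, map_sub, map_smul, map_smul]
      rfl
  · intro h
    obtain ⟨α, β, hr⟩ := hkill r h
    have h1 := cocycle_kill x y b n s hy (P.complex.d 1 0).hom
      (P.complex.d 2 1).hom h12 u v w φ huv hφ r α β hr
    have h2 : r • z = 0 := ((hz.smul P r).eq_zero_iff P).2 ⟨ModuleCat.ofHom
      ((β * x ^ s) • v - (α * y ^ s) • w), by
        ext q
        exact LinearMap.congr_fun h1 q⟩
    exact (congrArg _ h2).trans (map_zero _)

end

/-! ### Divisibility of power series by variables -/

section PowerSeriesLemmas

open MvPowerSeries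

variable {σ : Type} {k : Type} [CommRing k]

lemma coeff_add_single_X_mul (i : σ) (F : MvPowerSeries σ k) (m : σ →₀ ℕ) :
    coeff (m + Finsupp.single i 1) (X i * F) = coeff m F := by
  rw [add_comm, X, coeff_add_monomial_mul, one_mul]

lemma coeff_X_mul_of_eq_zero (i : σ) (F : MvPowerSeries σ k) (m : σ →₀ ℕ) (hm : m i = 0) :
    coeff m (X i * F) = 0 :=
  X_dvd_iff.1 (dvd_mul_right _ _) m hm

/-- If every coefficient of `F` at exponents `m` with `m i < a i` for all `i ∈ s` vanishes, then `F`
lies in the monomial ideal generated by the `X i ^ a i`, `i ∈ s`. -/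
lemma mem_span_of_coeff [DecidableEq σ] (s : Finset σ) (a : σ → ℕ) (F : MvPowerSeries σ k)
    (hF : ∀ m : σ →₀ ℕ, (∀ i ∈ s, m i < a i) → coeff m F = 0) :
    F ∈ Ideal.span ((fun i => (X i : MvPowerSeries σ k) ^ a i) '' (s : Set σ)) := by
  induction s using Finset.induction_on generalizing F with
  | empty =>
    have : F = 0 := by
      ext m; exact hF m (by simp)
    rw [this]; exact zero_mem _
  | insert i s hi ih =>
    let F1 : MvPowerSeries σ k := fun m => if m i < a i then coeff m F else 0
    have hF1 : ∀ m, coeff m F1 = if m i < a i then coeff m F else 0 := fun m => rfl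
    have h1 : F1 ∈ Ideal.span ((fun i => (X i : MvPowerSeries σ k) ^ a i) '' (s : Set σ)) := by
      apply ih
      intro m hm
      rw [hF1]
      split_ifs with h
      · exact hF m (by
          intro j hj
          rcases Finset.mem_insert.1 hj with rfl | hj
          · exact h
          · exact hm j hj)
      · rfl
    have h2 : (X i : MvPowerSeries σ k) ^ a i ∣ F - F1 := by
      rw [X_pow_dvd_iff]
      intro m hm
      rw [map_sub, hF1, if_pos hm, sub_self]
    have h3 : F - F1 ∈ Ideal.span ((fun i => (X i : MvPowerSeries σ k) ^ a i) ''
        ((insert i s : Finset σ) : Set σ)) :=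
      Ideal.mem_of_dvd _ h2 (Ideal.subset_span ⟨i, by simp, rfl⟩)
    rw [← sub_add_cancel F F1]
    refine add_mem h3 (Ideal.span_mono (Set.image_mono ?_) h1)
    simp

lemma X_dvd_of_dvd_X_mul {i j : σ} (hij : i ≠ j) {F : MvPowerSeries σ k}
    (h : (X j : MvPowerSeries σ k) ∣ X i * F) : (X j : MvPowerSeries σ k) ∣ F := by
  rw [X_dvd_iff] at h ⊢
  intro m hm
  rw [← coeff_add_single_X_mul i]
  apply h
  simp [hm, hij]

lemma X_dvd_of_dvd_X_pow_mul {i j : σ} (hij : i ≠ j) {F : MvPowerSeries σ k} (n : ℕ)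
    (h : (X j : MvPowerSeries σ k) ∣ X i ^ n * F) : (X j : MvPowerSeries σ k) ∣ F := by
  induction n with
  | zero => simpa using h
  | succ n ih =>
    rw [pow_succ', mul_assoc] at h
    exact ih (X_dvd_of_dvd_X_mul hij h)

end PowerSeriesLemmas

/-! ### Regularity and saturation in `B` -/

section

open MvPowerSeries


lemma two_eq_zero_P : (2 : P) = 0 := by
  have h := map_ofNat (MvPowerSeries.C (σ := Fin 6) (R := ZMod 2)) 2
  rw [← h, show (OfNat.ofNat 2 : ZMod 2) = 0 from rfl, map_zero]

lemma mk_eq_zero_iff {F : P} : Ideal.Quotient.mk (Ideal.span {f}) F = 0 ↔ ∃ G, F = f * G := by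
  rw [Ideal.Quotient.eq_zero_iff_mem, Ideal.mem_span_singleton]; rfl

/-- Modulo `y₂` the equation `f` becomes the monomial `y₁²y₃²y₆`, a nonzerodivisor. -/
lemma y1_dvd_of_dvd_f_mul : ∀ F : P, y 1 ∣ f * F → y 1 ∣ F := by
  intro F h
  have h1 : y 1 ∣ y 0 ^ 2 * (y 2 ^ 2 * (y 5 ^ 1 * F)) := by
    have : y 0 ^ 2 * (y 2 ^ 2 * (y 5 ^ 1 * F)) = f * F -
      y 1 * ((y 0 * y 2 * y 3 * y 4 + y 1 * y 3 ^ 2 * y 5) * F) := by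
      unfold f; ring
    rw [this]
    exact dvd_sub h (dvd_mul_right _ _)
  exact X_dvd_of_dvd_X_pow_mul (by decide) _ (X_dvd_of_dvd_X_pow_mul (by decide) _
    (X_dvd_of_dvd_X_pow_mul (by decide) _ h1))

lemma y_ne_zero (i : Fin 6) : y i ≠ 0 := by
  intro h
  have := coeff_index_single_self_X (R := ZMod 2) i
  change coeff _ (y i) = 1 at this
  rw [h] at this
  simp at this

/-- `y₂` is a nonzerodivisor on `B`. -/
lemma y1_cancel (c : B) (h : Ideal.Quotient.mk (Ideal.span {f}) (y 1) * c = 0) : c = 0 := by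
  obtain ⟨c, rfl⟩ := Ideal.Quotient.mk_surjective c
  rw [← map_mul, mk_eq_zero_iff] at h
  obtain ⟨G, hG⟩ := h
  obtain ⟨G', rfl⟩ := y1_dvd_of_dvd_f_mul G (hG ▸ dvd_mul_right _ _)
  refine mk_eq_zero_iff.2 ⟨G', mul_left_cancel₀ (y_ne_zero 1) ?_⟩
  rw [hG]; ring

lemma y1_pow_cancel (k : ℕ) (c : B) (h : Ideal.Quotient.mk (Ideal.span {f}) (y 1) ^ k * c = 0) :
    c = 0 := by
  induction k with
  | zero => simpa using h
  | succ k ih =>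
    rw [pow_succ', mul_assoc] at h
    exact ih (y1_cancel _ h)

lemma coeff_X5_sq_mul (G : P) (m : Fin 6 →₀ ℕ) :
    coeff (m + Finsupp.single 2 1 + Finsupp.single 2 1 + Finsupp.single 5 1) (y 5 * (y 2 * (y 2 * G))) =
      coeff m G := by
  unfold y
  rw [coeff_add_single_X_mul, coeff_add_single_X_mul, coeff_add_single_X_mul]

/-- Modulo `y₂` one has `f = y₁²y₃²y₆`, so the saturation of `(f, y₂)` with respect to `y₁` is reached
after multiplication by `y₁²`. -/
lemma sat_step (a : ℕ) (α : P) (γ : P) (h : y 1 ∣ y 0 ^ a * α - f * γ) :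
    ∃ γ', y 1 ∣ y 0 ^ 2 * α - f * γ' := by
  rcases Nat.lt_or_ge a 2 with ha | ha
  · refine ⟨y 0 ^ (2 - a) * γ, ?_⟩
    have h2 : y 0 ^ 2 = y 0 ^ (2 - a) * y 0 ^ a := by rw [← pow_add]; congr 1; omega
    rw [h2]
    have := Dvd.dvd.mul_left h (y 0 ^ (2 - a))
    convert this using 1; ring
  · obtain ⟨c, rfl⟩ := Nat.exists_eq_add_of_le ha
    have h1 : y 1 ∣ y 0 ^ c * α - y 5 * (y 2 * (y 2 * γ)) := by
      refine X_dvd_of_dvd_X_pow_mul (i := 0) (by decide) 2 ?_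
      have h2 : y 0 ^ 2 * (y 0 ^ c * α - y 5 * (y 2 * (y 2 * γ))) = y 0 ^ (2 + c) * α - f * γ +
          y 1 * ((y 0 * y 2 * y 3 * y 4 + y 1 * y 3 ^ 2 * y 5) * γ) := by
        unfold f; ring
      change y 1 ∣ y 0 ^ 2 * (y 0 ^ c * α - y 5 * (y 2 * (y 2 * γ)))
      rw [h2]
      exact dvd_add h (dvd_mul_right _ _)
    have h3 := mem_span_of_coeff {0, 1} (fun i => if i = 0 then c else 1) γ (by
      intro m hm
      have hm0 : m 0 < c := by simpa using hm 0 (by simp)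
      have hm1 : m 1 = 0 := by simpa using hm 1 (by simp)
      rw [← coeff_X5_sq_mul]
      have h4 := X_dvd_iff.1 h1 (m + Finsupp.single 2 1 + Finsupp.single 2 1 + Finsupp.single 5 1)
        (by simp [hm1])
      have h5 := X_pow_dvd_iff.1 (dvd_mul_right (y 0 ^ c) α)
        (m + Finsupp.single 2 1 + Finsupp.single 2 1 + Finsupp.single 5 1)
        (by simpa using hm0)
      rw [map_sub, h5, zero_sub, neg_eq_zero] at h4
      exact h4)
    simp only [Finset.coe_insert, Finset.coe_singleton, Set.image_insert_eq, Set.image_singleton,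
      Ideal.mem_span_pair] at h3
    obtain ⟨γ', δ, h3⟩ := h3
    simp only [if_true, show ((1 : Fin 6) = 0) = False by simp, if_false, pow_one] at h3
    change γ' * y 0 ^ c + δ * y 1 = γ at h3
    refine ⟨γ', ?_⟩
    have h6 : y 1 ∣ α - y 5 * (y 2 * (y 2 * γ')) := by
      refine X_dvd_of_dvd_X_pow_mul (i := 0) (by decide) c ?_
      change y 1 ∣ y 0 ^ c * (α - y 5 * (y 2 * (y 2 * γ')))
      have h7 : y 0 ^ c * (α - y 5 * (y 2 * (y 2 * γ'))) = y 0 ^ c * α - y 5 * (y 2 * (y 2 * γ)) +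
          y 1 * (y 5 * y 2 * y 2 * δ) := by
        rw [← h3]; ring
      rw [h7]
      exact dvd_add h1 (dvd_mul_right _ _)
    have h8 : y 0 ^ 2 * α - f * γ' = y 0 ^ 2 * (α - y 5 * (y 2 * (y 2 * γ'))) -
        y 1 * ((y 0 * y 2 * y 3 * y 4 + y 1 * y 3 ^ 2 * y 5) * γ') := by
      unfold f; ring
    rw [h8]
    exact dvd_sub (Dvd.dvd.mul_left h6 _) (dvd_mul_right _ _)

lemma sat_step_B (a : ℕ) (α c : B)
    (h : Ideal.Quotient.mk (Ideal.span {f}) (y 0) ^ a * α =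
      Ideal.Quotient.mk (Ideal.span {f}) (y 1) * c) :
    ∃ c', Ideal.Quotient.mk (Ideal.span {f}) (y 0) ^ 2 * α =
      Ideal.Quotient.mk (Ideal.span {f}) (y 1) * c' := by
  obtain ⟨α, rfl⟩ := Ideal.Quotient.mk_surjective α
  obtain ⟨c, rfl⟩ := Ideal.Quotient.mk_surjective c
  rw [← map_pow, ← map_mul, ← map_mul, ← sub_eq_zero, ← map_sub, mk_eq_zero_iff] at h
  obtain ⟨γ, h⟩ := h
  obtain ⟨γ', c', h'⟩ := sat_step a α γ ⟨c, by linear_combination h⟩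
  refine ⟨Ideal.Quotient.mk _ c', ?_⟩
  rw [← map_pow, ← map_mul, ← map_mul, ← sub_eq_zero, ← map_sub, mk_eq_zero_iff]
  exact ⟨γ', by linear_combination h'⟩

/-- The saturation of `(y₂ⁿ)` with respect to `y₁` in `B` is reached at the exponent `2n`, by
induction on `n` from `sat_step_B`. -/
lemma sat_pow (n a : ℕ) (α c : B)
    (h : Ideal.Quotient.mk (Ideal.span {f}) (y 0) ^ a * α =
      Ideal.Quotient.mk (Ideal.span {f}) (y 1) ^ n * c) :
    ∃ c', Ideal.Quotient.mk (Ideal.span {f}) (y 0) ^ (2 * n) * α =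
      Ideal.Quotient.mk (Ideal.span {f}) (y 1) ^ n * c' := by
  set x' := Ideal.Quotient.mk (Ideal.span {f}) (y 0)
  set y' := Ideal.Quotient.mk (Ideal.span {f}) (y 1) with hy'
  induction n generalizing a α c with
  | zero => exact ⟨α, by simp⟩
  | succ n ih =>
    obtain ⟨c1, h1⟩ := sat_step_B a α (y' ^ n * c) (by rw [h, pow_succ']; ring)
    obtain ⟨c2, h2⟩ := ih a c1 (x' ^ 2 * c) (by
      refine sub_eq_zero.1 (y1_cancel _ ?_)
      linear_combination -(x' ^ a) * h1 + x' ^ 2 * h)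
    exact ⟨c2, by linear_combination x' ^ (2 * n) * h1 + y' * h2⟩

/-- The syzygy hypothesis of `exists_annihilator_eq`, a form of weak proregularity of `y₁, y₂` in
`B`, with `s = 2n`. -/
lemma weak_proregular (n : ℕ) (α β : B)
    (h : α * Ideal.Quotient.mk (Ideal.span {f}) (y 0) ^ (n + 2 * n) +
      β * Ideal.Quotient.mk (Ideal.span {f}) (y 1) ^ (n + 2 * n) = 0) :
    ∃ c, α * Ideal.Quotient.mk (Ideal.span {f}) (y 0) ^ (2 * n) =
      c * Ideal.Quotient.mk (Ideal.span {f}) (y 1) ^ n := by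
  obtain ⟨c, hc⟩ := sat_pow n (n + 2 * n) α
    (- (β * Ideal.Quotient.mk (Ideal.span {f}) (y 1) ^ (2 * n))) (by
      rw [pow_add _ n (2 * n)] at h ⊢
      linear_combination h)
  exact ⟨c, by rw [mul_comm, hc, mul_comm]⟩

end

/-! ### Slices in `y₅, y₆` -/

/-- The polynomial ring `𝔽₂[u]`, where `u` stands for the ratio `y₅/y₆`. -/
abbrev A2 : Type := Polynomial (ZMod 2)

/-- The exponent of the monomial `y₁^a y₂^b y₃^c y₄^e y₅^j y₆^l`. -/
def expo (a b c e j l : ℕ) : Fin 6 →₀ ℕ := Finsupp.equivFunOnFinite.symm ![a, b, c, e, j, l]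

lemma expo_eq (m : Fin 6 →₀ ℕ) : m = expo (m 0) (m 1) (m 2) (m 3) (m 4) (m 5) := by
  ext i; fin_cases i <;> rfl

/-- The form of degree `d` in `y₅, y₆` multiplying `y₁^a y₂^b y₃^c y₄^e` in `F`, dehomogenised to a
polynomial in `u`: the coefficient of `u^j` is that of `y₁^a y₂^b y₃^c y₄^e y₅^j y₆^(d-j)`. -/
def Lc (a b c e d : ℕ) (F : P) : A2 :=
  ∑ j ∈ Finset.range (d + 1), Polynomial.monomial j (MvPowerSeries.coeff (expo a b c e j (d - j)) F)

lemma Lc_add (a b c e d : ℕ) (F G : P) : Lc a b c e d (F + G) = Lc a b c e d F + Lc a b c e d G := by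
  simp [Lc, Finset.sum_add_distrib]

lemma coeff_Lc (a b c e d j : ℕ) (F : P) : (Lc a b c e d F).coeff j =
    if j ≤ d then MvPowerSeries.coeff (expo a b c e j (d - j)) F else 0 := by
  simp only [Lc, Polynomial.finsetSum_coeff, Polynomial.coeff_monomial]
  rw [Finset.sum_ite_eq' (Finset.range (d + 1)) j]
  simp

lemma natDegree_Lc (a b c e d : ℕ) (F : P) : (Lc a b c e d F).natDegree ≤ d := by
  rw [Polynomial.natDegree_le_iff_coeff_eq_zero]
  intro N hN
  rw [coeff_Lc, if_neg (by omega)]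

lemma coeff_shift (i : Fin 6) (m m' : Fin 6 →₀ ℕ) (h : m' = m + Finsupp.single i 1) (F : P) :
    MvPowerSeries.coeff m' (y i * F) = MvPowerSeries.coeff m F := by
  rw [h]; exact coeff_add_single_X_mul i F m

lemma Lc_y0 (a b c e d : ℕ) (F : P) : Lc (a + 1) b c e d (y 0 * F) = Lc a b c e d F := by
  refine Finset.sum_congr rfl fun j _ => ?_
  rw [coeff_shift 0 (expo a b c e j (d - j))]
  ext i; fin_cases i <;> simp [expo]

lemma Lc_y1 (a b c e d : ℕ) (F : P) : Lc a (b + 1) c e d (y 1 * F) = Lc a b c e d F := by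
  refine Finset.sum_congr rfl fun j _ => ?_
  rw [coeff_shift 1 (expo a b c e j (d - j))]
  ext i; fin_cases i <;> simp [expo]

lemma Lc_y2 (a b c e d : ℕ) (F : P) : Lc a b (c + 1) e d (y 2 * F) = Lc a b c e d F := by
  refine Finset.sum_congr rfl fun j _ => ?_
  rw [coeff_shift 2 (expo a b c e j (d - j))]
  ext i; fin_cases i <;> simp [expo]

lemma Lc_y3 (a b c e d : ℕ) (F : P) : Lc a b c (e + 1) d (y 3 * F) = Lc a b c e d F := by
  refine Finset.sum_congr rfl fun j _ => ?_
  rw [coeff_shift 3 (expo a b c e j (d - j))]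
  ext i; fin_cases i <;> simp [expo]

lemma coeff_pow_mul_zero (i : Fin 6) (n : ℕ) (m : Fin 6 →₀ ℕ) (h : m i < n) (F : P) :
    MvPowerSeries.coeff m (y i ^ n * F) = 0 :=
  MvPowerSeries.X_pow_dvd_iff.1 (dvd_mul_right _ _) m h

lemma Lc_pow0_zero (a b c e d n : ℕ) (F : P) (h : a < n) : Lc a b c e d (y 0 ^ n * F) = 0 := by
  refine Finset.sum_eq_zero fun j _ => ?_
  rw [coeff_pow_mul_zero 0 n _ h, map_zero]

lemma Lc_pow1_zero (a b c e d n : ℕ) (F : P) (h : b < n) : Lc a b c e d (y 1 ^ n * F) = 0 := by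
  refine Finset.sum_eq_zero fun j _ => ?_
  rw [coeff_pow_mul_zero 1 n _ h, map_zero]

lemma Lc_pow2_zero (a b c e d n : ℕ) (F : P) (h : c < n) : Lc a b c e d (y 2 ^ n * F) = 0 := by
  refine Finset.sum_eq_zero fun j _ => ?_
  rw [coeff_pow_mul_zero 2 n _ h, map_zero]

lemma Lc_pow3_zero (a b c e d n : ℕ) (F : P) (h : e < n) : Lc a b c e d (y 3 ^ n * F) = 0 := by
  refine Finset.sum_eq_zero fun j _ => ?_
  rw [coeff_pow_mul_zero 3 n _ h, map_zero]

lemma Lc_pow0 (a b c e d n : ℕ) (F : P) : Lc (a + n) b c e d (y 0 ^ n * F) = Lc a b c e d F := by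
  induction n generalizing F with
  | zero => simp
  | succ n ih => rw [pow_succ', mul_assoc, ← add_assoc, Lc_y0, ih]

lemma Lc_pow1 (a b c e d n : ℕ) (F : P) : Lc a (b + n) c e d (y 1 ^ n * F) = Lc a b c e d F := by
  induction n generalizing F with
  | zero => simp
  | succ n ih => rw [pow_succ', mul_assoc, ← add_assoc, Lc_y1, ih]

lemma Lc_pow2 (a b c e d n : ℕ) (F : P) : Lc a b (c + n) e d (y 2 ^ n * F) = Lc a b c e d F := by
  induction n generalizing F with
  | zero => simp
  | succ n ih => rw [pow_succ', mul_assoc, ← add_assoc, Lc_y2, ih]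

lemma Lc_pow3 (a b c e d n : ℕ) (F : P) : Lc a b c (e + n) d (y 3 ^ n * F) = Lc a b c e d F := by
  induction n generalizing F with
  | zero => simp
  | succ n ih => rw [pow_succ', mul_assoc, ← add_assoc, Lc_y3, ih]

lemma Lc_y5 (a b c e d : ℕ) (F : P) : Lc a b c e (d + 1) (y 5 * F) = Lc a b c e d F := by
  unfold Lc
  rw [Finset.sum_range_succ, Nat.sub_self,
    show MvPowerSeries.coeff (expo a b c e (d + 1) 0) (y 5 * F) = 0 from
      coeff_X_mul_of_eq_zero 5 F _ rfl, map_zero, add_zero]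
  refine Finset.sum_congr rfl fun j hj => ?_
  rw [Finset.mem_range] at hj
  rw [coeff_shift 5 (expo a b c e j (d - j))]
  ext i; fin_cases i <;> simp [expo]; omega

lemma Lc_y4 (a b c e d : ℕ) (F : P) :
    Lc a b c e (d + 1) (y 4 * F) = Polynomial.X * Lc a b c e d F := by
  unfold Lc
  rw [Finset.sum_range_succ',
    show MvPowerSeries.coeff (expo a b c e 0 (d + 1 - 0)) (y 4 * F) = 0 from
      coeff_X_mul_of_eq_zero 4 F _ rfl, map_zero, add_zero, Finset.mul_sum]
  refine Finset.sum_congr rfl fun j hj => ?_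
  rw [coeff_shift 4 (expo a b c e j (d - j)), Polynomial.X_mul_monomial]
  ext i; fin_cases i <;> simp [expo]

/-! ### The ring homomorphism to `𝔽₂[u][[s]]` -/

/-- The images of the variables under `Ψ`: `y₁, …, y₄ ↦ 0`, `y₅ ↦ u s`, `y₆ ↦ s`. -/
def psiVar : Fin 6 → MvPowerSeries Unit A2 :=
  ![0, 0, 0, 0, PowerSeries.C Polynomial.X * PowerSeries.X, PowerSeries.X]

lemma hasSubst_psiVar : MvPowerSeries.HasSubst psiVar := by
  apply MvPowerSeries.hasSubst_of_constantCoeff_zero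
  intro i
  fin_cases i <;> simp [psiVar]
  · right; exact PowerSeries.constantCoeff_X
  · exact PowerSeries.constantCoeff_X

/-- The homomorphism `𝔽₂[[y₁,…,y₆]] → 𝔽₂[u][[s]]` with `y₁, …, y₄ ↦ 0`, `y₅ ↦ u s`, `y₆ ↦ s`. Its
image consists of the series whose coefficient of `s^d` has degree at most `d` in `u`. -/
def Ψ : P →+* PowerSeries A2 := (MvPowerSeries.substAlgHom hasSubst_psiVar : P →ₐ[ZMod 2] _).toRingHom

lemma Ψ_y (i : Fin 6) : Ψ (y i) = psiVar i := MvPowerSeries.substAlgHom_X hasSubst_psiVar i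

lemma psi_prod (m : Fin 6 →₀ ℕ) (d : ℕ) :
    PowerSeries.coeff d (m.prod fun s e => psiVar s ^ e : PowerSeries A2) =
      if m 0 = 0 ∧ m 1 = 0 ∧ m 2 = 0 ∧ m 3 = 0 ∧ m 4 + m 5 = d then Polynomial.X ^ m 4 else 0 := by
  rw [Finsupp.prod_fintype _ _ (by simp), Fin.prod_univ_six]
  change PowerSeries.coeff d ((0 : PowerSeries A2) ^ m 0 * 0 ^ m 1 * 0 ^ m 2 * 0 ^ m 3 *
    (PowerSeries.C Polynomial.X * PowerSeries.X) ^ m 4 * PowerSeries.X ^ m 5) = _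
  by_cases h0 : m 0 = 0
  swap
  · simp [h0]
  by_cases h1 : m 1 = 0
  swap
  · simp [h1]
  by_cases h2 : m 2 = 0
  swap
  · simp [h2]
  by_cases h3 : m 3 = 0
  swap
  · simp [h3]
  simp only [h0, h1, h2, h3, pow_zero, one_mul, true_and]
  rw [mul_pow, mul_assoc, ← pow_add, ← map_pow, PowerSeries.coeff_C_mul, PowerSeries.coeff_X_pow]
  simp [eq_comm]

lemma coeff_Ψ (F : P) (d : ℕ) : PowerSeries.coeff d (Ψ F) = Lc 0 0 0 0 d F := by
  have h1 : PowerSeries.coeff d (Ψ F) =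
      finsum (fun m => MvPowerSeries.coeff m F •
        (PowerSeries.coeff d (m.prod fun s e => psiVar s ^ e : PowerSeries A2))) := by
    have := MvPowerSeries.coeff_subst hasSubst_psiVar F (Finsupp.single () d)
    rw [← MvPowerSeries.substAlgHom_apply hasSubst_psiVar] at this
    exact this
  rw [h1, finsum_eq_sum_of_support_subset (s := (Finset.range (d + 1)).image
    (fun j => expo 0 0 0 0 j (d - j)))]
  · rw [Finset.sum_image]
    · refine Finset.sum_congr rfl fun j hj => ?_
      rw [Finset.mem_range] at hj
      rw [psi_prod, if_pos]
      · rw [← Polynomial.C_mul_X_pow_eq_monomial, Polynomial.smul_eq_C_mul]; rfl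
      · refine ⟨rfl, rfl, rfl, rfl, ?_⟩
        change j + (d - j) = d
        omega
    · intro i _ j _ hij
      exact DFunLike.congr_fun hij 4
  · intro m hm
    rw [Function.mem_support, psi_prod] at hm
    have hm' : m 0 = 0 ∧ m 1 = 0 ∧ m 2 = 0 ∧ m 3 = 0 ∧ m 4 + m 5 = d := by
      by_contra hc
      rw [if_neg hc, smul_zero] at hm
      exact hm rfl
    obtain ⟨h0, h1, h2, h3, h4⟩ := hm'
    rw [Finset.mem_coe, Finset.mem_image]
    refine ⟨m 4, Finset.mem_range.2 (by omega), ?_⟩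
    rw [expo_eq m, h0, h1, h2, h3]
    change expo 0 0 0 0 (m 4) (d - m 4) = expo 0 0 0 0 (m 4) (m 5)
    congr 1; omega

/-- The kernel of `Ψ` is generated by `y₁, …, y₄`. -/
lemma ker_Ψ (F : P) (h : Ψ F = 0) : ∃ a b c e : P, F = y 0 * a + y 1 * b + y 2 * c + y 3 * e := by
  have h1 := mem_span_of_coeff {0, 1, 2, 3} (fun _ => 1) F (by
    intro m hm
    have h0 : m 0 = 0 := by simpa using hm 0 (by simp)
    have h1 : m 1 = 0 := by simpa using hm 1 (by simp)
    have h2 : m 2 = 0 := by simpa using hm 2 (by simp)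
    have h3 : m 3 = 0 := by simpa using hm 3 (by simp)
    have h4 := coeff_Ψ F (m 4 + m 5)
    rw [h, map_zero] at h4
    have h5 := congrArg (fun q => Polynomial.coeff q (m 4)) h4
    simp only [Polynomial.coeff_zero, coeff_Lc, if_pos (Nat.le_add_right _ _), Nat.add_sub_cancel_left] at h5
    rw [expo_eq m, h0, h1, h2, h3]
    exact h5.symm)
  simp only [Finset.coe_insert, Finset.coe_singleton, Set.image_insert_eq, Set.image_singleton,
    Ideal.mem_span_insert, Ideal.mem_span_singleton', pow_one] at h1
  obtain ⟨a, z, ⟨b, z', ⟨c, z'', ⟨e, rfl⟩, rfl⟩, rfl⟩, rfl⟩ := h1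
  refine ⟨a, b, c, e, ?_⟩
  unfold y; ring

/-- A section of `Ψ` over its image: the series in `y₅, y₆` whose form of degree `d` is the
homogenisation of `h d`, provided that `h d` has degree at most `d`. -/
def lift (h : ℕ → A2) : P := fun m =>
  if m 0 = 0 ∧ m 1 = 0 ∧ m 2 = 0 ∧ m 3 = 0 then (h (m 4 + m 5)).coeff (m 4) else 0

lemma coeff_lift (h : ℕ → A2) (hd : ∀ d, (h d).natDegree ≤ d) (d : ℕ) :
    PowerSeries.coeff d (Ψ (lift h)) = h d := by
  ext j
  rw [coeff_Ψ, coeff_Lc]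
  split_ifs with hj
  · change (h (j + (d - j))).coeff j = _
    rw [Nat.add_sub_cancel' hj]
  · exact (Polynomial.coeff_eq_zero_of_natDegree_lt ((hd d).trans_lt (by omega))).symm

lemma Ψ_f : Ψ f = 0 := by
  have h0 : Ψ (y 0) = 0 := Ψ_y 0
  have h1 : Ψ (y 1) = 0 := Ψ_y 1
  unfold f
  simp [h0, h1]

/-! ### Fibonacci polynomials -/

/-- The Fibonacci polynomials over `𝔽₂`: `τ₀ = 0`, `τ₁ = 1`, `τ_(k+2) = u τ_(k+1) + τ_k`. -/
def tau : ℕ → A2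
  | 0 => 0
  | 1 => 1
  | (k + 2) => Polynomial.X * tau (k + 1) + tau k

/-- The homogenised Fibonacci polynomials: `tauH (k + 1)` is the form of degree `k` in `y₅, y₆`
corresponding to `τ_(k+1)`, and `tauH 0 = 0`. -/
def tauH : ℕ → P
  | 0 => 0
  | 1 => 1
  | (k + 2) => y 4 * tauH (k + 1) + y 5 ^ 2 * tauH k

lemma tau_monic (k : ℕ) : (tau (k + 1)).Monic ∧ (tau (k + 1)).natDegree = k := by
  induction k using Nat.strong_induction_on with
  | _ k ih =>
    match k with
    | 0 => simp [tau]
    | 1 => simp [tau, Polynomial.monic_X]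
    | k + 2 =>
      obtain ⟨h1, h2⟩ := ih (k + 1) (by omega)
      obtain ⟨h3, h4⟩ := ih k (by omega)
      have hd : (tau (k + 1)).degree < (Polynomial.X * tau (k + 2)).degree := by
        apply Polynomial.degree_lt_degree
        rw [Polynomial.natDegree_X_mul h1.ne_zero, h2, h4]
        omega
      constructor
      · rw [tau]
        exact (Polynomial.monic_X.mul h1).add_of_left hd
      · rw [tau, Polynomial.natDegree_add_eq_left_of_degree_lt hd,
          Polynomial.natDegree_X_mul h1.ne_zero, h2]

lemma Ψ_tauH (k : ℕ) : PowerSeries.X * Ψ (tauH k) = PowerSeries.X ^ k * PowerSeries.C (tau k) := by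
  induction k using Nat.strong_induction_on with
  | _ k ih =>
    match k with
    | 0 => simp [tau, tauH]
    | 1 => simp [tau, tauH]
    | k + 2 =>
      have h1 := ih (k + 1) (by omega)
      have h2 := ih k (by omega)
      have h4 : Ψ (y 4) = PowerSeries.C Polynomial.X * PowerSeries.X := Ψ_y 4
      have h5 : Ψ (y 5) = PowerSeries.X := Ψ_y 5
      simp only [tau, tauH, map_add, map_mul, map_pow, h4, h5]
      linear_combination PowerSeries.C Polynomial.X * PowerSeries.X * h1 + PowerSeries.X ^ 2 * h2

lemma Ψ_tauH_succ (k : ℕ) : Ψ (tauH (k + 1)) = PowerSeries.X ^ k * PowerSeries.C (tau (k + 1)) := by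
  have h := Ψ_tauH (k + 1)
  rw [pow_succ', mul_assoc] at h
  exact mul_left_cancel₀ PowerSeries.X_ne_zero h

/-- Every irreducible polynomial divides some Fibonacci polynomial: over the finite field
`𝔽₂[u]/(p)` the invertible matrix `!![u, 1; 1, 0]`, which drives the recursion, has finite order. -/
lemma exists_dvd_tau (p : A2) (hp : p.Monic) (hirr : Irreducible p) : ∃ m, 1 ≤ m ∧ p ∣ tau (m + 1) := by
  have : Fact (Irreducible p) := ⟨hirr⟩
  have : Module.Finite (ZMod 2) (AdjoinRoot p) := hp.finite_adjoinRoot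
  have : Finite (AdjoinRoot p) := Module.finite_of_finite (ZMod 2)
  let q : A2 →+* AdjoinRoot p := AdjoinRoot.mk p
  let M : Matrix (Fin 2) (Fin 2) (AdjoinRoot p) := !![q Polynomial.X, 1; 1, 0]
  have hM : IsUnit M := by
    rw [Matrix.isUnit_iff_isUnit_det, Matrix.det_fin_two_of]
    simp
  obtain ⟨u, hu⟩ := hM
  have : Finite (Matrix (Fin 2) (Fin 2) (AdjoinRoot p))ˣ := inferInstance
  obtain ⟨N, hN, hN1⟩ := isOfFinOrder_iff_pow_eq_one.1 (isOfFinOrder_of_finite u)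
  have hpow : ∀ n, Matrix.mulVec (M ^ n) ![1, 0] = ![q (tau (n + 1)), q (tau n)] := by
    intro n
    induction n with
    | zero => simp [tau]
    | succ n ih =>
      rw [pow_succ', ← Matrix.mulVec_mulVec, ih]
      ext i
      fin_cases i <;> simp [M, tau, Matrix.mulVec, dotProduct, Fin.sum_univ_two]
  have h1 := hpow N
  rw [← hu, ← Units.val_pow_eq_pow_val, hN1, Units.val_one, Matrix.one_mulVec] at h1
  have h2 : (0 : AdjoinRoot p) = q (tau N) := congrFun h1 1
  have h3 : p ∣ tau N := AdjoinRoot.mk_eq_zero.1 h2.symm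
  rcases N with _ | _ | N
  · omega
  · exact absurd (isUnit_of_dvd_one h3) hirr.not_isUnit
  · exact ⟨N + 1, by omega, h3⟩

/-! ### Elements killing the class -/

lemma f_eq : f = y 5 * (y 0 * y 2) ^ 2 + y 4 * ((y 0 * y 2) * (y 1 * y 3)) + y 5 * (y 1 * y 3) ^ 2 := by
  unfold f; ring

/-- With `A = y₁y₃` and `C = y₂y₄`, the equation reads `f = y₆A² + y₅AC + y₆C²`. Iterating it turns
`y₆^k A^(k+1) C^l` into `τ_(k+1)(y₅, y₆) A C^(k+l)`, up to a multiple of `C^(k+l+1)`. -/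
lemma tauH_mem (k l : ℕ) : y 5 ^ k * (y 0 * y 2) ^ (k + 1) * (y 1 * y 3) ^ l -
    tauH (k + 1) * (y 0 * y 2) * (y 1 * y 3) ^ (k + l) ∈
      Ideal.span {(y 1 * y 3) ^ (k + l + 1), f} := by
  set A := y 0 * y 2
  set C := y 1 * y 3
  induction k using Nat.strong_induction_on generalizing l with
  | _ k ih =>
    match k with
    | 0 =>
      simp [tauH]
    | 1 =>
      rw [Ideal.mem_span_pair]
      refine ⟨-y 5, C ^ l, ?_⟩
      rw [f_eq, tauH, tauH, tauH]
      linear_combination (y 4 * A * C ^ (l + 1)) * two_eq_zero_P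
    | k + 2 =>
      obtain ⟨a, b, h1⟩ := Ideal.mem_span_pair.1 (ih (k + 1) (by omega) (l + 1))
      obtain ⟨a', b', h2⟩ := Ideal.mem_span_pair.1 (ih k (by omega) (l + 2))
      rw [Ideal.mem_span_pair]
      refine ⟨-y 4 * a - y 5 ^ 2 * a', -y 4 * b - y 5 ^ 2 * b' + y 5 ^ (k + 1) * A ^ (k + 1) * C ^ l, ?_⟩
      have e1 : k + 1 + (l + 1) = k + 2 + l := by omega
      have e2 : k + (l + 2) = k + 2 + l := by omega
      rw [e1] at h1
      rw [e2] at h2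
      have e3 : tauH (k + 2 + 1) = y 4 * tauH (k + 1 + 1) + y 5 ^ 2 * tauH (k + 1) := rfl
      rw [e3]
      have hf : f = y 5 * A ^ 2 + y 4 * (A * C) + y 5 * C ^ 2 := f_eq
      linear_combination -y 4 * h1 - y 5 ^ 2 * h2 + y 5 ^ (k + 1) * A ^ (k + 1) * C ^ l * hf +
        (y 4 * tauH (k + 2) + y 5 ^ 2 * tauH (k + 1)) * A * C ^ (k + 2 + l) * two_eq_zero_P

/-- The reduction by `f` moves along the monomials `A^a C^j` with `a + j = m + 1`: once the first two
multiples of `W`, at `j = 0` and `j = 1`, are in `I`, so are all the others, weighted by `y₆^j`. -/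
lemma climb (I : Ideal P) (hf : f ∈ I) (W : P) (m : ℕ)
    (h0 : W * (y 0 * y 2) ^ (m + 1) ∈ I) (h1 : y 5 * W * (y 0 * y 2) ^ m * (y 1 * y 3) ∈ I)
    (j a : ℕ) (hja : a + j = m + 1) :
    y 5 ^ j * W * (y 0 * y 2) ^ a * (y 1 * y 3) ^ j ∈ I := by
  induction j using Nat.strong_induction_on generalizing a with
  | _ j ih =>
    match j with
    | 0 =>
      obtain rfl : a = m + 1 := by omega
      simpa using h0
    | 1 =>
      obtain rfl : a = m := by omega
      simpa using h1
    | j + 2 =>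
      have h2 := ih (j + 1) (by omega) (a + 1) (by omega)
      have h3 := ih j (by omega) (a + 2) (by omega)
      have h4 := add_mem (add_mem (I.mul_mem_left
          (y 5 ^ (j + 1) * W * (y 0 * y 2) ^ a * (y 1 * y 3) ^ j) hf)
        (I.mul_mem_left (-y 4) h2)) (I.mul_mem_left (- y 5 ^ 2) h3)
      convert h4 using 1
      rw [f_eq]; ring

/-- The numerator `y₁ y₂ y₆^m g A C^m`, with `A = y₁y₃` and `C = y₂y₄`, of the class over
`(y₁y₂)^(m+2)` whose annihilator is computed. -/
def bElt (m : ℕ) (g : P) : P := y 0 * y 1 * y 5 ^ m * g * (y 0 * y 2) * (y 1 * y 3) ^ m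

/-- The homogenisation of `g` to a form of degree `m` in `y₅, y₆`. -/
def gLift (m : ℕ) (g : A2) : P := lift (fun d => if d = m then g else 0)

lemma Ψ_gLift (m : ℕ) (g : A2) (hg : g.natDegree ≤ m) :
    Ψ (gLift m g) = PowerSeries.X ^ m * PowerSeries.C g := by
  ext1 d
  rw [gLift, coeff_lift _ (by intro d; split_ifs with h <;> simp [h, hg]), mul_comm,
    PowerSeries.coeff_C_mul, PowerSeries.coeff_X_pow]
  split_ifs <;> simp

/-- If `τ_(m+1) = p g`, every `r` with `Ψ r` divisible by `p` multiplies `bElt` into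
`(y₁^(m+2), y₂^(m+2), f)`: up to an element of `(y₁, y₂, y₃, y₄)`, the product `r g` is a multiple
of the homogenised `τ_(m+1)`. -/
lemma kill_P (m : ℕ) (hm : 1 ≤ m) (p g : A2) (hp : p.Monic) (hpg : tau (m + 1) = p * g)
    (r : P) (hr : ∀ d, p ∣ PowerSeries.coeff d (Ψ r)) :
    r * bElt m (gLift m g) ∈ Ideal.span {y 0 ^ (m + 2), y 1 ^ (m + 2), f} := by
  set I := Ideal.span {y 0 ^ (m + 2), y 1 ^ (m + 2), f} with hI
  have hX : y 0 ^ (m + 2) ∈ I := Ideal.subset_span (by simp)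
  have hY : y 1 ^ (m + 2) ∈ I := Ideal.subset_span (by simp)
  have hf : f ∈ I := Ideal.subset_span (by simp)
  have hg : g.natDegree ≤ m := by
    have h1 := (tau_monic m).2
    rw [hpg, hp.natDegree_mul' (by
      rintro rfl
      exact (tau_monic m).1.ne_zero (by rw [hpg, mul_zero]))] at h1
    omega
  choose h hh using hr
  have hhd : ∀ d, (h d).natDegree ≤ d := by
    intro d
    rcases eq_or_ne (h d) 0 with h0 | h0
    · simp [h0]
    · have h1 := natDegree_Lc 0 0 0 0 d r
      rw [← coeff_Ψ, hh, hp.natDegree_mul' h0] at h1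
      omega
  have hΨr : Ψ r = PowerSeries.C p * Ψ (lift h) := by
    ext1 d
    rw [PowerSeries.coeff_C_mul, coeff_lift h hhd, hh]
  obtain ⟨a, b, c, e, hk⟩ := ker_Ψ (r * gLift m g - tauH (m + 1) * lift h) (by
    rw [map_sub, map_mul, map_mul, Ψ_gLift m g hg, Ψ_tauH_succ, hpg, hΨr, map_mul]
    ring)
  -- `t1` treats the multiple of `τ_(m+1)`; `tX`, `tY`, `tU`, `tV` the multiples of `y₁`, `y₂`, `y₃`, `y₄`.
  have t1 : y 0 * y 1 * (tauH (m + 1) * (y 0 * y 2) * (y 1 * y 3) ^ m) ∈ I := by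
    obtain ⟨a, b, h1⟩ := Ideal.mem_span_pair.1 (tauH_mem m 0)
    have h2 : y 0 * y 1 * (tauH (m + 1) * (y 0 * y 2) * (y 1 * y 3) ^ m) =
      (y 5 ^ m * y 1 * y 2 ^ (m + 1)) * y 0 ^ (m + 2) - (a * y 0 * y 3 ^ (m + 1)) * y 1 ^ (m + 2)
        - (b * y 0 * y 1) * f := by
      rw [add_zero] at h1
      linear_combination y 0 * y 1 * h1
    rw [h2]
    exact sub_mem (sub_mem (I.mul_mem_left _ hX) (I.mul_mem_left _ hY)) (I.mul_mem_left _ hf)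
  have tY : y 0 * y 1 * y 5 ^ m * (y 0 * y 2) * (y 1 * y 3) ^ m * y 1 ∈ I := by
    have : y 0 * y 1 * y 5 ^ m * (y 0 * y 2) * (y 1 * y 3) ^ m * y 1 =
      (y 0 * y 5 ^ m * (y 0 * y 2) * y 3 ^ m) * y 1 ^ (m + 2) := by ring
    rw [this]; exact I.mul_mem_left _ hY
  have tU : y 0 * y 1 * y 5 ^ m * (y 0 * y 2) * (y 1 * y 3) ^ m * y 2 ∈ I := by
    obtain ⟨m', rfl⟩ := Nat.exists_eq_add_of_le hm
    have : y 0 * y 1 * y 5 ^ (1 + m') * (y 0 * y 2) * (y 1 * y 3) ^ (1 + m') * y 2 =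
      (y 5 ^ m' * y 1 ^ (m' + 2) * y 3 ^ (1 + m')) * f -
      (y 5 ^ m' * y 3 ^ (1 + m') * (y 4 * y 0 * y 2 * y 3 + y 5 * y 1 * y 3 ^ 2))
        * y 1 ^ (1 + m' + 2) := by rw [f_eq]; ring
    rw [this]; exact sub_mem (I.mul_mem_left _ hf) (I.mul_mem_left _ hY)
  have tX : y 5 ^ m * (y 0 * y 1 * y 0) * (y 0 * y 2) ^ 1 * (y 1 * y 3) ^ m ∈ I := by
    refine climb I hf _ m ?_ ?_ m 1 (by omega)
    · have : y 0 * y 1 * y 0 * (y 0 * y 2) ^ (m + 1) =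
        (y 0 * y 1 * y 2 ^ (m + 1)) * y 0 ^ (m + 2) := by ring
      rw [this]; exact I.mul_mem_left _ hX
    · have : y 5 * (y 0 * y 1 * y 0) * (y 0 * y 2) ^ m * (y 1 * y 3) =
        (y 5 * y 1 * y 2 ^ m * (y 1 * y 3)) * y 0 ^ (m + 2) := by ring
      rw [this]; exact I.mul_mem_left _ hX
  have tV : y 5 ^ m * (y 0 * y 1 * y 3) * (y 0 * y 2) ^ 1 * (y 1 * y 3) ^ m ∈ I := by
    refine climb I hf _ m ?_ ?_ m 1 (by omega)
    · have : y 0 * y 1 * y 3 * (y 0 * y 2) ^ (m + 1) =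
        (y 1 * y 3 * y 2 ^ (m + 1)) * y 0 ^ (m + 2) := by ring
      rw [this]; exact I.mul_mem_left _ hX
    · obtain ⟨m', rfl⟩ := Nat.exists_eq_add_of_le hm
      have : y 5 * (y 0 * y 1 * y 3) * (y 0 * y 2) ^ (1 + m') * (y 1 * y 3) =
        (y 0 ^ (m' + 2) * y 2 ^ (1 + m')) * f -
        (y 2 ^ (1 + m') * (y 5 * y 0 * y 2 ^ 2 + y 4 * y 2 * y 1 * y 3))
          * y 0 ^ (1 + m' + 2) := by rw [f_eq]; ring
      rw [this]; exact sub_mem (I.mul_mem_left _ hf) (I.mul_mem_left _ hX)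
  have hfin : r * bElt m (gLift m g) = (y 5 ^ m * lift h) *
        (y 0 * y 1 * (tauH (m + 1) * (y 0 * y 2) * (y 1 * y 3) ^ m)) +
      a * (y 5 ^ m * (y 0 * y 1 * y 0) * (y 0 * y 2) ^ 1 * (y 1 * y 3) ^ m) +
      b * (y 0 * y 1 * y 5 ^ m * (y 0 * y 2) * (y 1 * y 3) ^ m * y 1) +
      c * (y 0 * y 1 * y 5 ^ m * (y 0 * y 2) * (y 1 * y 3) ^ m * y 2) +
      e * (y 5 ^ m * (y 0 * y 1 * y 3) * (y 0 * y 2) ^ 1 * (y 1 * y 3) ^ m) := by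
    unfold bElt
    linear_combination (y 0 * y 1 * y 5 ^ m * (y 0 * y 2) * (y 1 * y 3) ^ m) * hk
  rw [hfin]
  exact add_mem (add_mem (add_mem (add_mem (I.mul_mem_left _ t1) (I.mul_mem_left _ tX))
    (I.mul_mem_left _ tY)) (I.mul_mem_left _ tU)) (I.mul_mem_left _ tV)

/-! ### Elements not killing the class -/

/-- Pairing the three-term recursion with the Fibonacci polynomials telescopes. -/
lemma tau_telescope (ν : ℕ → A2) (h0 : ν 0 = 0) (M : ℕ) :
    ∑ i ∈ Finset.range M, tau (i + 1) * (ν i + Polynomial.X * ν (i + 1) + ν (i + 2)) =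
      tau (M + 1) * ν M + tau M * ν (M + 1) := by
  induction M with
  | zero => simp [h0, tau]
  | succ M ih =>
    rw [Finset.sum_range_succ, ih, tau]
    have h2 : (2 : A2) = 0 := CharTwo.two_eq_zero
    linear_combination (tau (M + 1) * ν M) * h2

/-- The slices of `f G` along the monomials `y₁^(i+1+K) y₂^(m-i+K) y₃^(i+1) y₄^(m-i)` are given by the
three-term recursion in the slices `ν` of `G`, one for each monomial of `f`. -/
lemma Lc_f_mul (m K i d : ℕ) (hi : i < m) (G : P) (ν : ℕ → A2)
    (hν : ∀ j, ν j = if 1 ≤ j ∧ j ≤ m then Lc (j - 1 + K) (m - j + K) (j - 1) (m - j) d G else 0) :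
    Lc (i + 1 + K) (m - i + K) (i + 1) (m - i) (d + 1) (f * G) =
      ν i + Polynomial.X * ν (i + 1) + ν (i + 2) := by
  have hf : f * G = y 0 ^ 2 * (y 2 ^ 2 * (y 5 * G)) +
    y 0 ^ 1 * (y 1 ^ 1 * (y 2 ^ 1 * (y 3 ^ 1 * (y 4 * G)))) + y 1 ^ 2 * (y 3 ^ 2 * (y 5 * G)) := by
    unfold f; ring
  obtain ⟨l, rfl⟩ := Nat.exists_eq_add_of_lt hi
  have em : i + l + 1 - i = l + 1 := by omega
  rw [hf, Lc_add, Lc_add, em]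
  congr 1
  · congr 1
    · rw [hν]
      rcases i with _ | i
      · rw [if_neg (by omega), mul_left_comm, Lc_pow2_zero _ _ _ _ _ _ _ (by omega)]
      · rw [if_pos (by omega), show i + 1 + 1 + K = i + K + 2 by omega, Lc_pow0,
          show i + 1 + 1 = i + 2 from rfl, Lc_pow2, Lc_y5]
        congr 1 <;> omega
    · rw [hν, if_pos (by omega), show i + 1 + K = i + K + 1 by omega,
        show l + 1 + K = l + K + 1 by omega, Lc_pow0, Lc_pow1, Lc_pow2, Lc_pow3, Lc_y4]
      congr 2 <;> omega
  · rw [hν]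
    rcases l with _ | l
    · rw [if_neg (by omega), mul_left_comm, Lc_pow3_zero _ _ _ _ _ _ _ (by omega)]
    · rw [if_pos (by omega), show l + 1 + 1 + K = l + K + 2 by omega, Lc_pow1,
        show l + 1 + 1 = l + 2 from rfl, Lc_pow3, Lc_y5]
      congr 1 <;> omega

/-- Converse of `kill_P`, also after multiplication by powers of `y₁y₂`. In the slices of the relation
along the monomials used in `Lc_f_mul`, the multiples of `y₁^(m+2+k)` and `y₂^(m+2+k)` disappear,
and `bElt` contributes only at `i = 0`. By `tau_telescope`, `g · Ψ r` is coefficientwise a multiple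
of `τ_(m+1) = p g`, and `g` can be cancelled. -/
lemma detect_P (m : ℕ) (hm : 1 ≤ m) (p g : A2) (hpg : tau (m + 1) = p * g)
    (hgd : g.natDegree ≤ m) (hg : g ≠ 0)
    (r : P) (k : ℕ) (h : ∃ α β G, r * bElt m (gLift m g) * (y 0 * y 1) ^ k =
      y 0 ^ (m + 2 + k) * α + y 1 ^ (m + 2 + k) * β + f * G) (d : ℕ) :
    p ∣ PowerSeries.coeff d (Ψ r) := by
  obtain ⟨α, β, G, h⟩ := h
  set H := r * gLift m g * y 5 ^ m with hH
  have hF : y 0 ^ (k + 2) * (y 1 ^ (m + (k + 1)) * (y 2 ^ 1 * (y 3 ^ m * H))) =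
      y 0 ^ (m + 2 + k) * α + y 1 ^ (m + 2 + k) * β + f * G := by
    rw [← h, bElt, hH]; ring
  have h5 : Ψ (y 5) = PowerSeries.X := Ψ_y 5
  have hΨH : Ψ H = PowerSeries.X ^ (m + m) * (PowerSeries.C g * Ψ r) := by
    rw [hH, map_mul, map_mul, map_pow, Ψ_gLift m g hgd, h5]; ring
  obtain ⟨m', rfl⟩ := Nat.exists_eq_add_of_le hm
  set d' := d + (1 + m') + m' with hd'
  set m := 1 + m' with hm'
  let ν : ℕ → A2 := fun j =>
    if 1 ≤ j ∧ j ≤ m then Lc (j - 1 + (k + 1)) (m - j + (k + 1)) (j - 1) (m - j) d' G else 0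
  have hsum := tau_telescope ν (by simp [ν]) m
  have hterm : ∀ i ∈ Finset.range m, tau (i + 1) * (ν i + Polynomial.X * ν (i + 1) + ν (i + 2)) =
      if i = 0 then Lc 0 0 0 0 (d' + 1) H else 0 := by
    intro i hi
    rw [Finset.mem_range] at hi
    rw [← Lc_f_mul m (k + 1) i d' hi G ν (fun _ => rfl)]
    have h1 := congrArg (Lc (i + 1 + (k + 1)) (m - i + (k + 1)) (i + 1) (m - i) (d' + 1)) hF
    rw [Lc_add, Lc_add, Lc_pow0_zero _ _ _ _ _ (m + 2 + k) α (by omega),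
      Lc_pow1_zero _ _ _ _ _ (m + 2 + k) β (by omega), zero_add, zero_add] at h1
    rw [← h1]
    split_ifs with h0
    · subst h0
      rw [show 0 + 1 + (k + 1) = 0 + (k + 2) by omega,
        show m - 0 + (k + 1) = 0 + (m + (k + 1)) by omega, Lc_pow0, Lc_pow1, Lc_pow2,
        show m - 0 = 0 + m by omega, Lc_pow3]
      simp [tau]
    · rw [mul_left_comm, Lc_pow1_zero _ _ _ _ _ _ _ (by omega), mul_zero]
  rw [Finset.sum_congr rfl hterm, Finset.sum_ite_eq' (Finset.range m) 0,
    if_pos (Finset.mem_range.2 (by omega)), show ν (m + 1) = 0 from if_neg (by omega), mul_zero,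
    add_zero, ← coeff_Ψ, hΨH, show d' + 1 = d + (m + m) by omega, PowerSeries.coeff_X_pow_mul,
    PowerSeries.coeff_C_mul, hpg] at hsum
  refine ⟨ν m, mul_left_cancel₀ hg ?_⟩
  rw [hsum]; ring

/-! ### The associated primes -/

/-- Otherwise the algebraic closure of `𝔽₂`, the union of the root sets of these polynomials, would be
finite. -/
lemma infinite_monic_irreducible : {p : A2 | p.Monic ∧ Irreducible p}.Infinite := by
  intro hfin
  have hK : Infinite (AlgebraicClosure (ZMod 2)) := inferInstance
  refine Set.infinite_univ (α := AlgebraicClosure (ZMod 2)) ?_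
  refine (hfin.biUnion (t := fun p => p.rootSet (AlgebraicClosure (ZMod 2)))
    fun p _ => Polynomial.rootSet_finite p _).subset fun a _ => ?_
  have ha : IsIntegral (ZMod 2) a := Algebra.IsIntegral.isIntegral a
  rw [Set.mem_iUnion₂]
  exact ⟨minpoly (ZMod 2) a, ⟨minpoly.monic ha, minpoly.irreducible ha⟩,
    Polynomial.mem_rootSet.2 ⟨minpoly.ne_zero ha, minpoly.aeval _ _⟩⟩

/-- The homomorphism `B → (𝔽₂[u]/(p))[[s]]` induced by `Ψ`. -/
def resMap (p : A2) : B →+* PowerSeries (AdjoinRoot p) :=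
  Ideal.Quotient.lift (Ideal.span {f}) ((PowerSeries.map (AdjoinRoot.mk p)).comp Ψ) (by
    intro a ha
    obtain ⟨c, rfl⟩ := Ideal.mem_span_singleton'.1 ha
    rw [map_mul, RingHom.comp_apply _ _ f, Ψ_f, map_zero, mul_zero])

/-- The kernel of `resMap p`. For irreducible `p` it is the prime ideal generated by `y₁, …, y₄` and the
homogenisation of `p` in `y₅, y₆`. -/
def primeOf (p : A2) : Ideal B := RingHom.ker (resMap p)

lemma mk_mem_primeOf (p : A2) (r : P) : Ideal.Quotient.mk (Ideal.span {f}) r ∈ primeOf p ↔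
    ∀ d, p ∣ PowerSeries.coeff d (Ψ r) := by
  rw [primeOf, RingHom.mem_ker, resMap, Ideal.Quotient.lift_mk, RingHom.comp_apply,
    PowerSeries.ext_iff]
  simp only [PowerSeries.coeff_map, map_zero, AdjoinRoot.mk_eq_zero]

lemma primeOf_isPrime (p : A2) (hp : Irreducible p) : (primeOf p).IsPrime := by
  have : Fact (Irreducible p) := ⟨hp⟩
  exact RingHom.ker_isPrime _

/-- The homogenisation of `p` lies in `primeOf p`, and in `primeOf q` only if `q ∣ p`. -/
lemma primeOf_injOn : Set.InjOn primeOf {p : A2 | p.Monic ∧ Irreducible p} := by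
  rintro p ⟨hp, hpi⟩ q ⟨hq, hqi⟩ h
  have hd : ∀ d, PowerSeries.coeff d (Ψ (gLift p.natDegree p)) =
      if d = p.natDegree then p else 0 := by
    intro d
    rw [gLift, coeff_lift _ (by intro d; split_ifs with h <;> simp [h])]
  have h1 : Ideal.Quotient.mk (Ideal.span {f}) (gLift p.natDegree p) ∈ primeOf p := by
    rw [mk_mem_primeOf]
    intro d
    rw [hd]
    split_ifs <;> simp
  rw [h, mk_mem_primeOf] at h1
  have h2 := h1 p.natDegree
  rw [hd, if_pos rfl] at h2
  exact (Polynomial.eq_of_monic_of_associated hq hp (hqi.associated_of_dvd hpi h2)).symm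

lemma primeOf_mem (p : A2) (hp : p.Monic) (hpi : Irreducible p) :
    primeOf p ∈ associatedPrimes B ((localCohomology J 2).obj (ModuleCat.of B B)) := by
  obtain ⟨m, hm, g, hpg⟩ := exists_dvd_tau p hp hpi
  have hg : g ≠ 0 := by
    rintro rfl
    exact (tau_monic m).1.ne_zero (by rw [hpg, mul_zero])
  have hgd : g.natDegree ≤ m := by
    have h1 := (tau_monic m).2
    rw [hpg, hp.natDegree_mul' hg] at h1
    omega
  obtain ⟨z, hz⟩ : ∃ z : (localCohomology J 2).obj (ModuleCat.of B B),
      ∀ r : B, r • z = 0 ↔ r ∈ primeOf p := exists_annihilator_eq (Ideal.Quotient.mk (Ideal.span {f}) (y 0))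
    (Ideal.Quotient.mk (Ideal.span {f}) (y 1))
    (Ideal.Quotient.mk (Ideal.span {f}) (bElt m (gLift m g))) (primeOf p) (m + 2) (2 * (m + 2))
    y1_pow_cancel (weak_proregular (m + 2))
    (by
      intro r hr
      obtain ⟨r, rfl⟩ := Ideal.Quotient.mk_surjective r
      have h := kill_P m hm p g hp hpg r ((mk_mem_primeOf p r).1 hr)
      simp only [Ideal.mem_span_insert, Ideal.mem_span_singleton'] at h
      obtain ⟨α, -, ⟨β, -, ⟨γ, rfl⟩, rfl⟩, h⟩ := h
      refine ⟨Ideal.Quotient.mk _ α, Ideal.Quotient.mk _ β, ?_⟩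
      simp only [← map_mul, ← map_pow, ← map_add]
      rw [← sub_eq_zero, ← map_sub, mk_eq_zero_iff]
      exact ⟨γ, by rw [h]; ring⟩)
    (by
      rintro r k ⟨α, β, h⟩
      obtain ⟨r, rfl⟩ := Ideal.Quotient.mk_surjective r
      obtain ⟨α, rfl⟩ := Ideal.Quotient.mk_surjective α
      obtain ⟨β, rfl⟩ := Ideal.Quotient.mk_surjective β
      simp only [← map_mul, ← map_pow, ← map_add] at h
      rw [← sub_eq_zero, ← map_sub, mk_eq_zero_iff] at h
      obtain ⟨G, h⟩ := h
      exact (mk_mem_primeOf p r).2 (detect_P m hm p g hpg hgd hg r k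
        ⟨α, β, G, by linear_combination h⟩))
  have hprime := primeOf_isPrime p hpi
  refine ⟨hprime, z, ?_⟩
  have : Submodule.colon (⊥ : Submodule B ((localCohomology J 2).obj (ModuleCat.of B B))) {z} =
      primeOf p := by
    ext r
    rw [Submodule.mem_colon_singleton, Submodule.mem_bot]
    exact hz r
  rw [this, hprime.radical]

/-- Singh–Swanson: `H²_{(y₁,y₂)}(B)` has infinitely many associated primes. -/
theorem H2_has_infinitely_many_associated_primes :
    (associatedPrimes B ((localCohomology J 2).obj (ModuleCat.of B B))).Infinite :=
  Set.infinite_of_injOn_mapsTo primeOf_injOn (fun p hp => primeOf_mem p hp.1 hp.2)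
    infinite_monic_irreducible
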